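/- Let μ and ν be Borel probability measures on ℝ^d and let k : ℝ^d × ℝ^d → (0,∞) be Borel measurable with ∫_{ℝ^d} k(x,y) dy = 1 for every x ∈ ℝ^d; for bounded Borel g : ℝ^d → ℝ define (Tg)(x) := ∫_{ℝ^d} k(x,y) g(y) dy. Assume: (invariance) ∫_{ℝ^d} Tg dν = ∫_{ℝ^d} g dμ for every bounded Borel g ≥ 0; (kernel logarithmic Sobolev inequality) there is M > 0 such that T(f² log f²)(x) ≤ M · T(|∇f|²)(x) + T(f²)(x) · log(T(f²)(x)) for every f ∈ C¹_c(ℝ^d) and x ∈ ℝ^d; and, for some 1 < p < q < ∞ and C > 0, ‖Tg‖_{q,ν} ≤ C ‖g‖_{p,μ} for every bounded Borel g. Then for every f ∈ C¹_c(ℝ^d), ∫_{ℝ^d} f² log( |f| / ‖f‖_{2,μ} ) dμ ≤ ( M p(q−1) / (2(q−p)) ) ∫_{ℝ^d} |∇f|² dμ + ( pq / (2(q−p)) ) (log C) ‖f‖²_{2,μ}, with the convention 0·log 0 = 0. -/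

import Mathlib

open MeasureTheory

/-- `g : ℝ^d → ℝ` is bounded and Borel measurable. -/
def BddBorel {d : ℕ} (g : EuclideanSpace ℝ (Fin d) → ℝ) : Prop :=
  Measurable g ∧ ∃ M, ∀ x, |g x| ≤ M

/-- `f : ℝ^d → ℝ` is continuously differentiable with compact support. -/
def C1c {d : ℕ} (f : EuclideanSpace ℝ (Fin d) → ℝ) : Prop :=
  ContDiff ℝ 1 f ∧ HasCompactSupport f

section aux
variable {d : ℕ}
local notation "Eu" => EuclideanSpace ℝ (Fin d)

lemma bb_int (k : Eu → Eu → ℝ) (hkmeas : Measurable (Function.uncurry k))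
    (hknorm : ∀ x, ∫ y, k x y = 1) (g : Eu → ℝ) (hg : BddBorel g) (x : Eu) :
    Integrable (fun y => k x y * g y) := by
  have hk : Integrable (k x) := by
    by_contra h
    have := hknorm x
    rw [integral_undef h] at this
    norm_num at this
  obtain ⟨hm, B, hB⟩ := hg
  exact hk.mul_bdd (c := B) hm.aestronglyMeasurable (Filter.Eventually.of_forall hB)

lemma bb_T (k : Eu → Eu → ℝ) (hkmeas : Measurable (Function.uncurry k))
    (hkpos : ∀ x y, 0 < k x y)
    (hknorm : ∀ x, ∫ y, k x y = 1) (g : Eu → ℝ) (hg : BddBorel g) :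
    BddBorel (fun x => ∫ y, k x y * g y) := by
  have hi := bb_int k hkmeas hknorm g hg
  obtain ⟨hm, B, hB⟩ := hg
  refine ⟨?_, B, fun x => ?_⟩
  · have : StronglyMeasurable (Function.uncurry (fun x y => k x y * g y)) :=
      (hkmeas.mul (hm.comp measurable_snd)).stronglyMeasurable
    exact this.integral_prod_right.measurable
  · have hk : Integrable (k x) := by
      have := bb_int k hkmeas hknorm (fun _ => 1) ⟨measurable_const, 1, by simp⟩ x
      simpa using this
    calc |∫ y, k x y * g y| ≤ ∫ y, |k x y * g y| := abs_integral_le_integral_abs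
      _ ≤ ∫ y, k x y * B := by
        apply integral_mono (hi x).abs (hk.mul_const B)
        intro y
        simp only [abs_mul, abs_of_pos (hkpos x y)]
        exact mul_le_mul_of_nonneg_left (hB y) (hkpos x y).le
      _ = B := by rw [integral_mul_const, hknorm]; simp

lemma bb_integrable (g : Eu → ℝ) (hg : BddBorel g) (μ : Measure Eu) [IsProbabilityMeasure μ] :
    Integrable g μ := by
  obtain ⟨hm, B, hB⟩ := hg
  exact Integrable.of_bound hm.aestronglyMeasurable B (Filter.Eventually.of_forall hB)

lemma bb_inv (μ ν : Measure Eu) [IsProbabilityMeasure μ] [IsProbabilityMeasure ν]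
    (k : Eu → Eu → ℝ) (hkmeas : Measurable (Function.uncurry k))
    (hkpos : ∀ x y, 0 < k x y)
    (hknorm : ∀ x, ∫ y, k x y = 1)
    (hinv : ∀ g : EuclideanSpace ℝ (Fin d) → ℝ, BddBorel g → (∀ x, 0 ≤ g x) →
      ∫ x, (∫ y, k x y * g y) ∂ν = ∫ x, g x ∂μ) (g : Eu → ℝ) (hg : BddBorel g) :
    ∫ x, (∫ y, k x y * g y) ∂ν = ∫ x, g x ∂μ := by
  have hg0 := hg
  obtain ⟨hm, B, hB⟩ := hg
  have hk : ∀ x, Integrable (k x) := fun x => by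
    have := bb_int k hkmeas hknorm (fun _ => 1) ⟨measurable_const, 1, by simp⟩ x
    simpa using this
  have h := hinv (fun y => g y + B) ⟨hm.add_const B, B + B, fun x => by
    have := abs_le.1 (hB x)
    rw [abs_le]; constructor <;> linarith⟩ (fun x => by have := abs_le.1 (hB x); linarith)
  have e : ∀ x, ∫ y, k x y * (g y + B) = (∫ y, k x y * g y) + B := fun x => by
    simp only [mul_add]
    rw [integral_add (bb_int k hkmeas hknorm g hg0 x) ((hk x).mul_const B), integral_mul_const,
      hknorm, one_mul]
  simp only [e] at h
  rw [integral_add (bb_integrable _ (bb_T k hkmeas hkpos hknorm g hg0) ν) (integrable_const _),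
    integral_add (bb_integrable _ hg0 μ) (integrable_const _)] at h
  simpa using h

lemma bb_comp (g : Eu → ℝ) (hg : BddBorel g) (φ : ℝ → ℝ) (hφ : Continuous φ) :
    BddBorel (fun x => φ (g x)) := by
  obtain ⟨hm, B, hB⟩ := hg
  obtain ⟨D, hD⟩ := (isCompact_Icc (a := -B) (b := B)).exists_bound_of_continuousOn
    hφ.continuousOn
  exact ⟨hφ.measurable.comp hm, D, fun x => hD _ (abs_le.1 (hB x))⟩

lemma bb_cs (g : Eu → ℝ) (hg : Continuous g) (hc : HasCompactSupport g) : BddBorel g := by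
  obtain ⟨D, hD⟩ := hc.exists_bound_of_continuous hg
  exact ⟨hg.measurable, D, hD⟩

lemma tangent (h u A U p : ℝ) (hp : 1 < p) (hh : 0 ≤ h) (hu : u = h ^ (1 / p)) (hA : 0 < A)
    (hU : 0 < U) :
    (1 / p - 1) * (h * Real.log h) + h * (Real.log A - Real.log U) ≤ u * (A / U) - h := by
  have hp0 : 0 < p := by linarith
  rcases hh.eq_or_lt with h0 | h0
  · subst h0
    rw [Real.zero_rpow (by positivity)] at hu
    simp [hu]
  · have hu0 : 0 < u := by rw [hu]; positivity
    have := Real.log_le_sub_one_of_pos (x := u * A / (h * U)) (by positivity)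
    rw [Real.log_div (by positivity) (by positivity), Real.log_mul hu0.ne' hA.ne',
      Real.log_mul h0.ne' hU.ne', hu, Real.log_rpow h0, ← hu] at this
    have h2 := mul_le_mul_of_nonneg_left this h0.le
    have e : h * (u * A / (h * U) - 1) = u * (A / U) - h := by field_simp
    rw [e] at h2
    linarith

lemma tangent2 (A U q a Q : ℝ) (hA : 0 < A) (hU : 0 < U) (ha : 0 < a) (hQ : 0 < Q) :
    q * (A * Real.log U) - A * Real.log A + A * (Real.log a - Real.log Q)
      ≤ U ^ q * (a / Q) - A := by
  have hUq : 0 < U ^ q := by positivity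
  have := Real.log_le_sub_one_of_pos (x := U ^ q * a / (A * Q)) (by positivity)
  rw [Real.log_div (by positivity) (by positivity), Real.log_mul hUq.ne' ha.ne',
    Real.log_mul hA.ne' hQ.ne', Real.log_rpow hU] at this
  have h2 := mul_le_mul_of_nonneg_left this hA.le
  have e : A * (U ^ q * a / (A * Q) - 1) = U ^ q * (a / Q) - A := by field_simp
  rw [e] at h2
  linarith

end aux

/-- for a positive normalized kernel operator
`(Tg)(x) = ∫ k(x,y) g(y) dy` satisfying the invariance, a kernel logarithmic Sobolev
inequality with constant `M`, and `‖Tg‖_{q,ν} ≤ C‖g‖_{p,μ}`, the measure `μ` satisfies a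
logarithmic Sobolev inequality on `C¹_c(ℝ^d)`. -/
theorem LSI_from_kernel_operator
    {d : ℕ} (μ ν : Measure (EuclideanSpace ℝ (Fin d)))
    [IsProbabilityMeasure μ] [IsProbabilityMeasure ν]
    (k : EuclideanSpace ℝ (Fin d) → EuclideanSpace ℝ (Fin d) → ℝ)
    (hkmeas : Measurable (Function.uncurry k))
    (hkpos : ∀ x y, 0 < k x y)
    (hknorm : ∀ x, ∫ y, k x y = 1)
    (p q C M : ℝ) (hp : 1 < p) (hpq : p < q) (hC : 0 < C) (hM : 0 < M)
    (hinv : ∀ g : EuclideanSpace ℝ (Fin d) → ℝ, BddBorel g → (∀ x, 0 ≤ g x) →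
      ∫ x, (∫ y, k x y * g y) ∂ν = ∫ x, g x ∂μ)
    (hkLSI : ∀ f : EuclideanSpace ℝ (Fin d) → ℝ, C1c f →
      ∀ x : EuclideanSpace ℝ (Fin d),
        (∫ y, k x y * ((f y) ^ 2 * Real.log ((f y) ^ 2)))
          ≤ M * (∫ y, k x y * ‖gradient f y‖ ^ 2)
            + (∫ y, k x y * (f y) ^ 2) * Real.log (∫ y, k x y * (f y) ^ 2))
    (hbound : ∀ g : EuclideanSpace ℝ (Fin d) → ℝ, BddBorel g →
      (∫ x, |∫ y, k x y * g y| ^ q ∂ν) ^ (1 / q)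
        ≤ C * (∫ x, |g x| ^ p ∂μ) ^ (1 / p)) :
    ∀ f : EuclideanSpace ℝ (Fin d) → ℝ, C1c f →
      ∫ x, (f x) ^ 2 * Real.log (|f x| / (∫ z, |f z| ^ (2 : ℝ) ∂μ) ^ ((1 : ℝ) / 2)) ∂μ
        ≤ (M * p * (q - 1) / (2 * (q - p))) * ∫ x, ‖gradient f x‖ ^ 2 ∂μ
          + (p * q / (2 * (q - p))) * Real.log C
            * ((∫ z, |f z| ^ (2 : ℝ) ∂μ) ^ ((1 : ℝ) / 2)) ^ 2 := by
  intro f hf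
  have hq1 : 1 < q := hp.trans hpq
  have hp0 : 0 < p := by linarith
  have hq0 : 0 < q := by linarith
  have hfc : Continuous f := hf.1.continuous
  have bf : BddBorel f := bb_cs f hfc hf.2
  have bh : BddBorel (fun y => f y ^ 2) := bb_comp f bf (fun t => t ^ 2) (by fun_prop)
  have bhl : BddBorel (fun y => f y ^ 2 * Real.log (f y ^ 2)) :=
    bb_comp _ bh (fun t => t * Real.log t) Real.continuous_mul_log
  have bu : BddBorel (fun y => (f y ^ 2) ^ (1 / p)) :=
    bb_comp _ bh (fun t => t ^ (1 / p)) (Real.continuous_rpow_const (by positivity))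
  have bG : BddBorel (fun y => ‖gradient f y‖ ^ 2) := by
    have e : (fun y => ‖gradient f y‖ ^ 2) = fun y => ‖fderiv ℝ f y‖ ^ 2 := by
      ext y; simp [gradient]
    rw [e]
    apply bb_cs
    · exact ((hf.1.continuous_fderiv (by norm_num)).norm).pow 2
    · exact (hf.2.fderiv (𝕜 := ℝ)).comp_left (g := fun L => ‖L‖ ^ 2) (by simp)
  have hrp : ∀ z, |f z| ^ (2 : ℝ) = f z ^ 2 := fun z => by
    rw [Real.rpow_two, sq_abs]
  simp only [hrp]
  set a := ∫ z, f z ^ 2 ∂μ with ha_def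
  have ha0 : 0 ≤ a := integral_nonneg fun z => sq_nonneg _
  have hs : (a ^ ((1 : ℝ) / 2)) ^ 2 = a := by
    rw [← Real.sqrt_eq_rpow, Real.sq_sqrt ha0]
  rw [hs]
  set E := ∫ x, ‖gradient f x‖ ^ 2 ∂μ with hE_def
  have hE0 : 0 ≤ E := integral_nonneg fun z => sq_nonneg _
  have hqp : 0 < q - p := by linarith
  have hq1' : 0 < q - 1 := by linarith
  rcases ha0.eq_or_lt with ha | ha
  · have h0 : (fun z => f z ^ 2) =ᵐ[μ] 0 :=
      (integral_eq_zero_iff_of_nonneg (fun z => sq_nonneg (f z)) (bb_integrable _ bh μ)).1 ha.symm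
    have : ∫ x, f x ^ 2 * Real.log (|f x| / a ^ ((1 : ℝ) / 2)) ∂μ = 0 := by
      rw [integral_eq_zero_of_ae]
      filter_upwards [h0] with x hx
      have hx' : f x ^ 2 = 0 := hx
      simp [hx']
    rw [this, ← ha]
    simp only [mul_zero, add_zero]
    positivity
  -- main case
  have hne : ∃ y, f y ≠ 0 := by
    by_contra hcon
    push Not at hcon
    rw [ha_def] at ha
    simp [hcon] at ha
  have hsupp : ∀ (g : EuclideanSpace ℝ (Fin d) → ℝ), BddBorel g → (∀ y, 0 ≤ g y) →
      (∀ y, f y ≠ 0 → g y ≠ 0) → ∀ x, 0 < ∫ y, k x y * g y := by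
    intro g bg hg0 hgf x
    rw [integral_pos_iff_support_of_nonneg (fun y => mul_nonneg (hkpos x y).le (hg0 y))
      (bb_int k hkmeas hknorm g bg x)]
    have ho : IsOpen (Function.support f) := hfc.isOpen_support
    refine lt_of_lt_of_le (ho.measure_pos volume hne) (measure_mono ?_)
    intro y hy
    exact mul_ne_zero (hkpos x y).ne' (hgf y hy)
  set A := fun x => ∫ y, k x y * f y ^ 2 with hA
  set U := fun x => ∫ y, k x y * (f y ^ 2) ^ (1 / p) with hU
  set L := fun x => ∫ y, k x y * (f y ^ 2 * Real.log (f y ^ 2)) with hL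
  set G := fun x => ∫ y, k x y * ‖gradient f y‖ ^ 2 with hG
  have bA : BddBorel A := bb_T k hkmeas hkpos hknorm _ bh
  have bU : BddBorel U := bb_T k hkmeas hkpos hknorm _ bu
  have bL : BddBorel L := bb_T k hkmeas hkpos hknorm _ bhl
  have bGG : BddBorel G := bb_T k hkmeas hkpos hknorm _ bG
  have bAl : BddBorel (fun x => A x * Real.log (A x)) :=
    bb_comp _ bA (fun t => t * Real.log t) Real.continuous_mul_log
  have bUq : BddBorel (fun x => U x ^ q) :=
    bb_comp _ bU (fun t => t ^ q) (Real.continuous_rpow_const hq0.le)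
  have Apos : ∀ x, 0 < A x := hsupp _ bh (fun y => sq_nonneg _) (fun y hy => pow_ne_zero 2 hy)
  have Upos : ∀ x, 0 < U x := hsupp _ bu (fun y => by positivity) (fun y hy => by positivity)
  have iA := bb_integrable _ bA ν
  have iL := bb_integrable _ bL ν
  have iG := bb_integrable _ bGG ν
  have iAl := bb_integrable _ bAl ν
  have iUq := bb_integrable _ bUq ν
  set H := ∫ x, f x ^ 2 * Real.log (f x ^ 2) ∂μ with hH
  have eA : ∫ x, A x ∂ν = a := bb_inv μ ν k hkmeas hkpos hknorm hinv _ bh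
  have eL : ∫ x, L x ∂ν = H := bb_inv μ ν k hkmeas hkpos hknorm hinv _ bhl
  have eG : ∫ x, G x ∂ν = E := bb_inv μ ν k hkmeas hkpos hknorm hinv _ bG
  set S := ∫ x, A x * Real.log (A x) ∂ν with hS
  set Q := ∫ x, U x ^ q ∂ν with hQ
  have Qpos : 0 < Q := by
    rw [hQ, integral_pos_iff_support_of_nonneg (fun x => (Real.rpow_pos_of_pos (Upos x) q).le) iUq]
    have : Function.support (fun x => U x ^ q) = Set.univ := by
      ext x; simp [(Real.rpow_pos_of_pos (Upos x) q).ne']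
    rw [this]; simp
  -- integrated kernel LSI
  have h1 : H ≤ M * E + S := by
    rw [← eL, ← eG, hS, ← integral_const_mul, ← integral_add (iG.const_mul M) iAl]
    exact integral_mono iL ((iG.const_mul M).add iAl) (fun x => hkLSI f hf x)
  -- pointwise Jensen
  have h2 : ∀ x, (1 / p - 1) * L x + A x * (Real.log (A x) - Real.log (U x)) ≤ 0 := by
    intro x
    have i1 := bb_int k hkmeas hknorm _ bhl x
    have i2 := bb_int k hkmeas hknorm _ bh x
    have i3 := bb_int k hkmeas hknorm _ bu x
    have hm : ∫ y, ((1 / p - 1) * (k x y * (f y ^ 2 * Real.log (f y ^ 2)))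
        + (k x y * f y ^ 2) * (Real.log (A x) - Real.log (U x)))
        ≤ ∫ y, ((k x y * (f y ^ 2) ^ (1 / p)) * (A x / U x) - k x y * f y ^ 2) := by
      apply integral_mono ((i1.const_mul _).add (i2.mul_const _)) ((i3.mul_const _).sub i2)
      intro y
      have := mul_le_mul_of_nonneg_left (tangent (f y ^ 2) _ (A x) (U x) p hp (sq_nonneg _) rfl
        (Apos x) (Upos x)) (hkpos x y).le
      simp only [Pi.add_apply, Pi.sub_apply]
      linarith
    rw [integral_add (i1.const_mul _) (i2.mul_const _), integral_sub (i3.mul_const _) i2,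
      integral_const_mul, integral_mul_const, integral_mul_const] at hm
    have e : U x * (A x / U x) = A x := by have := (Upos x).ne'; field_simp
    change (1 / p - 1) * L x + A x * (Real.log (A x) - Real.log (U x)) ≤
      U x * (A x / U x) - A x at hm
    linarith
  have h3 : (q - 1) * S + q * (1 / p - 1) * H + a * (Real.log a - Real.log Q) ≤ 0 := by
    have hm : ∫ x, ((q - 1) * (A x * Real.log (A x)) + q * (1 / p - 1) * L x
        + A x * (Real.log a - Real.log Q)) ∂ν ≤ ∫ x, (U x ^ q * (a / Q) - A x) ∂ν := by
      apply integral_mono (((iAl.const_mul _).add (iL.const_mul _)).add (iA.mul_const _))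
        ((iUq.mul_const _).sub iA)
      intro x
      have t1 := tangent2 (A x) (U x) q a Q (Apos x) (Upos x) ha Qpos
      have t2 := mul_le_mul_of_nonneg_left (h2 x) hq0.le
      simp only [Pi.add_apply, Pi.sub_apply]
      linarith
    have i12 : Integrable (fun x => (q - 1) * (A x * Real.log (A x)) + q * (1 / p - 1) * L x) ν :=
      (iAl.const_mul _).add (iL.const_mul _)
    rw [integral_add i12 (iA.mul_const _),
      integral_add (iAl.const_mul _) (iL.const_mul _), integral_sub (iUq.mul_const _) iA,
      integral_const_mul, integral_const_mul, integral_mul_const, integral_mul_const, eA, eL,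
      ← hQ, ← hS] at hm
    have e : Q * (a / Q) = a := by field_simp
    linarith
  have h4 : Real.log Q ≤ q * Real.log C + q / p * Real.log a := by
    have hb := hbound _ bu
    have e1 : ∀ x, |∫ y, k x y * (f y ^ 2) ^ (1 / p)| ^ q = U x ^ q := fun x => by
      rw [abs_of_pos (Upos x)]
    have e2 : ∀ x, |(f x ^ 2) ^ (1 / p)| ^ p = f x ^ 2 := fun x => by
      rw [abs_of_nonneg (by positivity), ← Real.rpow_mul (sq_nonneg _), one_div,
        inv_mul_cancel₀ hp0.ne', Real.rpow_one]
    simp only [e1, e2] at hb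
    rw [← hQ, ← ha_def] at hb
    have := Real.log_le_log (by positivity) hb
    rw [Real.log_mul hC.ne' (by positivity), Real.log_rpow Qpos, Real.log_rpow ha] at this
    have := mul_le_mul_of_nonneg_left this hq0.le
    have e : q * (1 / q * Real.log Q) = Real.log Q := by field_simp
    rw [e] at this
    calc _ ≤ _ := this
      _ = _ := by ring
  have h5 : ∫ x, f x ^ 2 * Real.log (|f x| / a ^ ((1 : ℝ) / 2)) ∂μ
      = 1 / 2 * (H - a * Real.log a) := by
    have e : ∀ x, f x ^ 2 * Real.log (|f x| / a ^ ((1 : ℝ) / 2))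
        = 1 / 2 * (f x ^ 2 * Real.log (f x ^ 2) - f x ^ 2 * Real.log a) := fun x => by
      by_cases h : f x = 0
      · simp [h]
      · rw [Real.log_div (by positivity) (by positivity), Real.log_rpow ha, Real.log_abs,
          Real.log_pow]
        push_cast
        ring
    simp only [e]
    rw [integral_const_mul, integral_sub (bb_integrable _ bhl μ)
      ((bb_integrable _ bh μ).mul_const _), integral_mul_const]
  rw [h5]
  have h6 := mul_le_mul_of_nonneg_left h4 ha.le
  have h7 := mul_le_mul_of_nonneg_left h1 hq1'.le
  have h8 : (q / p - 1) * (H - a * Real.log a) ≤ (q - 1) * (M * E) + q * (a * Real.log C) := by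
    have e : q * (1 / p - 1) * H = q / p * H - q * H := by ring
    rw [e] at h3
    linarith
  have h9 := mul_le_mul_of_nonneg_left h8 (show 0 ≤ p / (2 * (q - p)) by positivity)
  have e1 : p / (2 * (q - p)) * ((q / p - 1) * (H - a * Real.log a))
      = 1 / 2 * (H - a * Real.log a) := by
    have := hqp.ne'
    field_simp
  rw [e1] at h9
  calc _ ≤ _ := h9
    _ = _ := by ring
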